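/- Let H be a complex Hilbert space, c : H → H a self-adjoint unitary (c* = c and c∘c = id), and let p, P : H → H be orthogonal projections each commuting with c (c∘p = p∘c and c∘P = P∘c). Then the continuous linear map Φ : range(p) × range(1−P) × range(1−p) → H × range(1−P) defined by Φ(u, v₁, v₂) = (u + v₁ + c v₂, c v₁ − (1−P)(c u + v₂)) is bijective (note that c v₁ and (1−P)(c u + v₂) lie in range(1−P) because c commutes with P). In particular Φ is an isomorphism of Banach spaces. -/

import Mathlib

open ContinuousLinearMap

/-!
Since `c` is an involution commuting with `p`, the vector `x = u + c v₂` runs bijectively over `H`,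
and `c u + v₂ = c x`. Hence, with `q = 1 - P`, the map becomes
`(x, v) ↦ (x + v, c (v - q x))`, and as `c` restricts to an automorphism of `range q`
it remains to invert `(x, v) ↦ (x + v, v - q x)`. Substituting `y = x + v` turns this into the
triangular map `(y, v) ↦ (y, 2 v - q y)`, whose diagonal is invertible.
-/

section

variable {R M : Type*} [Ring R] [AddCommGroup M] [Module R M] [TopologicalSpace M]
  [IsTopologicalAddGroup M]

/-- The automorphism that a unit `T` of `M →L[R] M` induces on the range of an idempotent commuting
with `T`. -/
def rangeEquivOfCommute {q : M →L[R] M} (hq : IsIdempotentElem q) (T : (M →L[R] M)ˣ)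
    (hqT : Commute q T) : q.range ≃L[R] q.range :=
  (ContinuousLinearEquiv.ofUnit T).ofSubmodules q.range q.range
    ((IsIdempotentElem.commute_iff_of_isUnit T.isUnit hq).1 hqT).1

theorem coe_rangeEquivOfCommute_apply {q : M →L[R] M} (hq : IsIdempotentElem q)
    (T : (M →L[R] M)ˣ) (hqT : Commute q T) (x : q.range) :
    (rangeEquivOfCommute hq T hqT x : M) = (T : M →L[R] M) x :=
  rfl

/-- Doubling as an automorphism of the range of an idempotent, when `2` is invertible on the ambient
module. -/
noncomputable def rangeDoublingEquiv (h2 : IsUnit (2 : M →L[R] M)) {q : M →L[R] M}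
    (hq : IsIdempotentElem q) : q.range ≃L[R] q.range :=
  rangeEquivOfCommute hq h2.unit (Commute.ofNat_right q 2)

theorem rangeDoublingEquiv_apply (h2 : IsUnit (2 : M →L[R] M)) {q : M →L[R] M}
    (hq : IsIdempotentElem q) (v : q.range) : rangeDoublingEquiv h2 hq v = v + v :=
  Subtype.ext <| (coe_rangeEquivOfCommute_apply hq h2.unit _ v).trans <| two_smul ℕ (v : M)

theorem isTopCompl_range_range_one_sub {p : M →L[R] M} (hp : IsIdempotentElem p) :
    p.range.IsTopCompl (1 - p).range := by
  have ker_eq : p.ker = (1 - p).range :=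
    LinearMap.IsIdempotentElem.ker_eq_range_one_sub hp.toLinearMap
  exact ker_eq ▸ IsIdempotentElem.isTopCompl hp

/-- The decomposition `M = range p ⊕ T (range (1 - p))` for an idempotent `p` commuting with the
unit `T`, with the second summand parametrized by `range (1 - p)`. -/
noncomputable def twistedSumEquiv {p : M →L[R] M} (hp : IsIdempotentElem p) (T : (M →L[R] M)ˣ)
    (hpT : Commute p T) : (p.range × (1 - p).range) ≃L[R] M :=
  ((ContinuousLinearEquiv.refl R p.range).prodCongr
    (rangeEquivOfCommute hp.one_sub T ((Commute.one_left _).sub_left hpT))).trans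
    (Submodule.prodEquivOfIsTopCompl _ _ (isTopCompl_range_range_one_sub hp))

theorem twistedSumEquiv_apply {p : M →L[R] M} (hp : IsIdempotentElem p) (T : (M →L[R] M)ˣ)
    (hpT : Commute p T) (u : p.range) (w : (1 - p).range) :
    twistedSumEquiv hp T hpT (u, w) = (u : M) + (T : M →L[R] M) w :=
  rfl

/-- The shear `(x, v) ↦ (x + v, v)` of `M × N` along the inclusion of a submodule `N`. -/
def inclusionShear (N : Submodule R M) : (M × N) ≃L[R] M × N :=
  (ContinuousLinearEquiv.prodComm R M N).trans
    (((ContinuousLinearEquiv.refl R N).skewProd (.refl R M) N.subtypeL).trans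
      (ContinuousLinearEquiv.prodComm R N M))

theorem inclusionShear_apply (N : Submodule R M) (x : M) (v : N) :
    inclusionShear N (x, v) = (x + v, v) :=
  rfl

/-- The automorphism `(x, v) ↦ (x + v, v - q x)` of `M × range q` for an idempotent `q`, factored
as a shear followed by the triangular map `(y, v) ↦ (y, 2 v - q y)`. -/
noncomputable def idempotentCouplingEquiv (h2 : IsUnit (2 : M →L[R] M)) {q : M →L[R] M}
    (hq : IsIdempotentElem q) : (M × q.range) ≃L[R] M × q.range :=
  (inclusionShear q.range).trans
    ((ContinuousLinearEquiv.refl R M).skewProd (rangeDoublingEquiv h2 hq) (-q.rangeRestrict))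

theorem idempotentCouplingEquiv_apply (h2 : IsUnit (2 : M →L[R] M)) {q : M →L[R] M}
    (hq : IsIdempotentElem q) (x : M) (v : q.range) :
    idempotentCouplingEquiv h2 hq (x, v) = (x + v, v - q.rangeRestrict x) := by
  have map_coe : q.rangeRestrict v = v :=
    Subtype.ext ((LinearMap.IsIdempotentElem.mem_range_iff hq.toLinearMap).1 v.2)
  calc idempotentCouplingEquiv h2 hq (x, v)
    _ = (x + v, rangeDoublingEquiv h2 hq v + -q.rangeRestrict (x + v)) := by
      rw [idempotentCouplingEquiv, ContinuousLinearEquiv.trans_apply, inclusionShear_apply]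
      rfl
    _ = (x + v, v - q.rangeRestrict x) := by
      rw [rangeDoublingEquiv_apply, map_add, map_coe]
      abel_nf

section EdgeSymbol

variable (h2 : IsUnit (2 : M →L[R] M)) {c p q : M →L[R] M} (hc : c * c = 1)
  (hp : IsIdempotentElem p) (hq : IsIdempotentElem q) (hpc : Commute p c) (hqc : Commute q c)

/-- The edge symbol `(u, v, w) ↦ (u + v + c w, c v - q (c u + w))` as an isomorphism, for
idempotents `p` and `q` commuting with the involution `c`, where `q` plays the role of `1 - P`. -/
noncomputable def edgeSymbolEquiv : (p.range × q.range × (1 - p).range) ≃L[R] M × q.range :=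
  let T : (M →L[R] M)ˣ := ⟨c, c, hc, hc⟩
  ((ContinuousLinearEquiv.refl R p.range).prodCongr (.prodComm R q.range (1 - p).range)).trans <|
    (ContinuousLinearEquiv.prodAssoc R p.range (1 - p).range q.range).symm.trans <|
    ((twistedSumEquiv hp T hpc).prodCongr (.refl R q.range)).trans <|
    (idempotentCouplingEquiv h2 hq).trans <|
    (ContinuousLinearEquiv.refl R M).prodCongr (rangeEquivOfCommute hq T hqc)

theorem edgeSymbolEquiv_apply (u : p.range) (v : q.range) (w : (1 - p).range) :
    edgeSymbolEquiv h2 hc hp hq hpc hqc (u, v, w) = (u + c w + v,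
      rangeEquivOfCommute hq ⟨c, c, hc, hc⟩ hqc (v - q.rangeRestrict (u + c w))) := by
  let T : (M →L[R] M)ˣ := ⟨c, c, hc, hc⟩
  calc edgeSymbolEquiv h2 hc hp hq hpc hqc (u, v, w)
    _ = Prod.map id (rangeEquivOfCommute hq T hqc)
          (idempotentCouplingEquiv h2 hq (twistedSumEquiv hp T hpc (u, w), v)) := rfl
    _ = _ := by rw [twistedSumEquiv_apply, idempotentCouplingEquiv_apply, Prod.map_apply, id]

theorem edgeSymbolEquiv_apply_fst (u : p.range) (v : q.range) (w : (1 - p).range) :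
    (edgeSymbolEquiv h2 hc hp hq hpc hqc (u, v, w)).1 = (u : M) + v + c w := by
  rw [edgeSymbolEquiv_apply, add_right_comm]

theorem coe_edgeSymbolEquiv_apply_snd (u : p.range) (v : q.range) (w : (1 - p).range) :
    ((edgeSymbolEquiv h2 hc hp hq hpc hqc (u, v, w)).2 : M) = c v - q (c u + w) := by
  have map_map (x : M) : c (c x) = x := DFunLike.congr_fun hc x
  have map_comm (x : M) : q (c x) = c (q x) := DFunLike.congr_fun hqc.eq x
  calc ((edgeSymbolEquiv h2 hc hp hq hpc hqc (u, v, w)).2 : M)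
    _ = c (v - q (u + c w)) := by
      rw [edgeSymbolEquiv_apply, coe_rangeEquivOfCommute_apply]
      rfl
    _ = c v - q (c (u + c w)) := by rw [map_sub, map_comm]
    _ = c v - q (c u + w) := by rw [map_add c, map_map]

end EdgeSymbol

theorem statement3_general (h2 : IsUnit (2 : M →L[R] M)) {c p P : M →L[R] M} (hc : c * c = 1)
    (hp : IsIdempotentElem p) (hP : IsIdempotentElem P) (hpc : Commute p c) (hPc : Commute P c) :
    ∃ Ψ : (p.range × (1 - P).range × (1 - p).range) ≃L[R] M × (1 - P).range,
      ∀ (u : p.range) (v₁ : (1 - P).range) (v₂ : (1 - p).range),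
        (Ψ (u, v₁, v₂)).1 = (u : M) + v₁ + c v₂ ∧
        ((Ψ (u, v₁, v₂)).2 : M) = c v₁ - (1 - P) (c u + v₂) :=
  have hQc : Commute (1 - P) c := (Commute.one_left c).sub_left hPc
  ⟨edgeSymbolEquiv h2 hc hp hP.one_sub hpc hQc, fun u v₁ v₂ =>
    ⟨edgeSymbolEquiv_apply_fst h2 hc hp hP.one_sub hpc hQc u v₁ v₂,
      coe_edgeSymbolEquiv_apply_snd h2 hc hp hP.one_sub hpc hQc u v₁ v₂⟩⟩

end

/-- Invertibility of the operator-valued symbol `σ_X` at a unit edge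
covector: the continuous linear map
`Φ(u, v₁, v₂) = (u + v₁ + c v₂, c v₁ − (1−P)(c u + v₂))`
from `range p × range (1−P) × range (1−p)` to `H × range (1−P)` is bijective, hence an
isomorphism of Banach spaces. -/
theorem statement3 {H : Type*} [NormedAddCommGroup H] [InnerProductSpace ℂ H] [CompleteSpace H]
    (c p P : H →L[ℂ] H)
    (hc_sa : ContinuousLinearMap.adjoint c = c) (hc2 : c ∘L c = 1)
    (hp_sa : ContinuousLinearMap.adjoint p = p) (hp2 : p ∘L p = p)
    (hP_sa : ContinuousLinearMap.adjoint P = P) (hP2 : P ∘L P = P)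
    (hcp : c ∘L p = p ∘L c) (hcP : c ∘L P = P ∘L c) :
    ∃ Φ : ↥(LinearMap.range p.toLinearMap) × ↥(LinearMap.range ((1 : H →L[ℂ] H) - P).toLinearMap) ×
            ↥(LinearMap.range ((1 : H →L[ℂ] H) - p).toLinearMap) →L[ℂ]
          H × ↥(LinearMap.range ((1 : H →L[ℂ] H) - P).toLinearMap),
      (∀ (u : ↥(LinearMap.range p.toLinearMap)) (v₁ : ↥(LinearMap.range ((1 : H →L[ℂ] H) - P).toLinearMap))
          (v₂ : ↥(LinearMap.range ((1 : H →L[ℂ] H) - p).toLinearMap)),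
        (Φ (u, v₁, v₂)).1 = (u : H) + (v₁ : H) + c (v₂ : H) ∧
        ((Φ (u, v₁, v₂)).2 : H) = c (v₁ : H) - ((1 : H →L[ℂ] H) - P) (c (u : H) + (v₂ : H))) ∧
      Function.Bijective Φ ∧
      ∃ Ψ : (↥(LinearMap.range p.toLinearMap) × ↥(LinearMap.range ((1 : H →L[ℂ] H) - P).toLinearMap) ×
              ↥(LinearMap.range ((1 : H →L[ℂ] H) - p).toLinearMap)) ≃L[ℂ]
            (H × ↥(LinearMap.range ((1 : H →L[ℂ] H) - P).toLinearMap)),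
        ∀ x, Ψ x = Φ x := by
  have h2 : IsUnit (2 : H →L[ℂ] H) := by
    simpa only [map_ofNat] using (IsUnit.mk0 (2 : ℂ) two_ne_zero).map (algebraMap ℂ (H →L[ℂ] H))
  obtain ⟨Ψ, hΨ⟩ := statement3_general h2 hc2 hp2 hP2 hcp.symm hcP.symm
  exact ⟨Ψ, hΨ, Ψ.bijective, Ψ, fun _ => rfl⟩
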